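/- (Necessary condition for constrained optimality) Let X be a real Banach space, let ρ : X → ℝ and h : X → ℝ be Lipschitz functions, let x ∈ ℝ, and let A := {ξ ∈ X : h(ξ) ≤ x}. Suppose ξ* ∈ A minimizes ρ over A (i.e. ρ(ξ) ≥ ρ(ξ*) for all ξ ∈ A) and suppose 0 ∉ ∂°h(ξ*). Then there exist a real number λ ≥ 0, an element ζ ∈ ∂°ρ(ξ*), and an element η ∈ ∂°h(ξ*) such that ζ + λ·η = 0. -/

import Mathlib

/-!
Write `p = ρ°(ξ*;·)` and `q = h°(ξ*;·)`; these are finite sublinear functionals bounded by a multiple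
of the norm. If `q v < 0`, then `ξ* + t v` is feasible for small `t > 0`, so minimality gives
`0 ≤ p v` (`clarkeDeriv_nonneg_of_neg`). As `0 ∉ ∂°h(ξ*)`, some `v₀` has `q v₀ < 0`; this is a
Slater condition for the convex system `p < 0, q < 0`, and it yields a multiplier `l ≥ 0` with
`0 ≤ p + l q` everywhere (`exists_multiplier`). Finally, the Hahn–Banach theorem on `X × X`, applied
to the zero functional on the diagonal and the sublinear functional `(a, b) ↦ p a + l q b`, splits
this inequality into linear functionals `ζ ≤ p` and `θ ≤ l q` with `ζ + θ = 0`
(`exists_linear_split`); then `η = θ / l`, or any element of `∂°h(ξ*)` when `l = 0`.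
-/

open Filter Topology Pointwise NNReal

/-- The generalized (Clarke) directional derivative of `f` at `x` in direction `v`:
`f°(x;v) = limsup_{y→x, t↓0} (f(y+tv) − f(y))/t`. -/
noncomputable def clarkeDeriv {X : Type*} [NormedAddCommGroup X] [NormedSpace ℝ X]
    (f : X → ℝ) (x v : X) : ℝ :=
  Filter.limsup (fun p : X × ℝ => (f (p.1 + p.2 • v) - f p.1) / p.2)
    ((𝓝 x) ×ˢ (𝓝[>] (0 : ℝ)))

/-- The Clarke subdifferential `∂°f(x) = {ζ ∈ X* : ζ(v) ≤ f°(x;v) for all v}`. -/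
def clarkeSubdiff {X : Type*} [NormedAddCommGroup X] [NormedSpace ℝ X]
    (f : X → ℝ) (x : X) : Set (X →L[ℝ] ℝ) :=
  {ζ | ∀ v, ζ v ≤ clarkeDeriv f x v}

section ClarkeDeriv

variable {X : Type*} [NormedAddCommGroup X] [NormedSpace ℝ X] {f : X → ℝ} {M : ℝ≥0}

lemma abs_quotient_le (hf : LipschitzWith M f) (v y : X) {t : ℝ} (ht : 0 < t) :
    |(f (y + t • v) - f y) / t| ≤ M * ‖v‖ := by
  have h := hf.dist_le_mul (y + t • v) y
  rw [Real.dist_eq, dist_eq_norm, add_sub_cancel_left, norm_smul, Real.norm_of_nonneg ht.le] at h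
  rw [abs_div, abs_of_pos ht, div_le_iff₀ ht]
  linarith

lemma eventually_snd_pos (x : X) : ∀ᶠ p : X × ℝ in (𝓝 x) ×ˢ (𝓝[>] (0 : ℝ)), 0 < p.2 :=
  tendsto_snd.eventually self_mem_nhdsWithin

lemma quotient_isBoundedUnder (hf : LipschitzWith M f) (x v : X) :
    IsBoundedUnder (· ≤ ·) ((𝓝 x) ×ˢ (𝓝[>] (0 : ℝ)))
      (fun p : X × ℝ => (f (p.1 + p.2 • v) - f p.1) / p.2) :=
  isBoundedUnder_of_eventually_le (a := M * ‖v‖) <| (eventually_snd_pos x).mono fun p hp =>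
    (abs_le.1 (abs_quotient_le hf v p.1 hp)).2

lemma clarkeDeriv_le (hf : LipschitzWith M f) {x v : X} {a : ℝ}
    (h : ∀ᶠ p : X × ℝ in (𝓝 x) ×ˢ (𝓝[>] (0 : ℝ)), (f (p.1 + p.2 • v) - f p.1) / p.2 ≤ a) :
    clarkeDeriv f x v ≤ a := by
  refine limsup_le_of_le ?_ h
  refine IsBoundedUnder.isCoboundedUnder_le ?_
  exact isBoundedUnder_of_eventually_ge (a := -(M * ‖v‖)) <| (eventually_snd_pos x).mono
    fun p hp => (abs_le.1 (abs_quotient_le hf v p.1 hp)).1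

lemma eventually_lt_of_clarkeDeriv_lt (hf : LipschitzWith M f) {x v : X} {a : ℝ}
    (h : clarkeDeriv f x v < a) :
    ∀ᶠ p : X × ℝ in (𝓝 x) ×ˢ (𝓝[>] (0 : ℝ)), (f (p.1 + p.2 • v) - f p.1) / p.2 < a :=
  eventually_lt_of_limsup_lt h (quotient_isBoundedUnder hf x v)

/-- The estimate for difference quotients based at the fixed point `x`. -/
lemma eventually_base_lt (hf : LipschitzWith M f) {x v : X} {a : ℝ}
    (h : clarkeDeriv f x v < a) :
    ∀ᶠ t : ℝ in 𝓝[>] (0 : ℝ), (f (x + t • v) - f x) / t < a :=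
  (tendsto_const_nhds.prodMk tendsto_id :
    Tendsto (fun t : ℝ => (x, t)) (𝓝[>] 0) ((𝓝 x) ×ˢ (𝓝[>] (0 : ℝ)))).eventually
    (eventually_lt_of_clarkeDeriv_lt hf h)

lemma clarkeDeriv_le_norm (hf : LipschitzWith M f) (x v : X) :
    clarkeDeriv f x v ≤ M * ‖v‖ :=
  clarkeDeriv_le hf <| (eventually_snd_pos x).mono fun p hp =>
    (abs_le.1 (abs_quotient_le hf v p.1 hp)).2

lemma clarkeDeriv_zero_le (hf : LipschitzWith M f) (x : X) : clarkeDeriv f x 0 ≤ 0 := by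
  simpa using clarkeDeriv_le_norm hf x 0

lemma clarkeDeriv_add_le (hf : LipschitzWith M f) (x v w : X) :
    clarkeDeriv f x (v + w) ≤ clarkeDeriv f x v + clarkeDeriv f x w := by
  refine le_of_forall_pos_le_add fun ε hε => ?_
  have hv := eventually_lt_of_clarkeDeriv_lt hf
    (show clarkeDeriv f x v < clarkeDeriv f x v + ε / 2 by linarith)
  have hw := eventually_lt_of_clarkeDeriv_lt hf
    (show clarkeDeriv f x w < clarkeDeriv f x w + ε / 2 by linarith)
  -- The increment along `v + w` is the one along `w` at `y` plus the one along `v` at `y + t w`.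
  have hT : Tendsto (fun p : X × ℝ => (p.1 + p.2 • w, p.2)) ((𝓝 x) ×ˢ (𝓝[>] (0 : ℝ)))
      ((𝓝 x) ×ˢ (𝓝[>] (0 : ℝ))) := by
    refine Tendsto.prodMk ?_ tendsto_snd
    have h2 : Tendsto (fun p : X × ℝ => p.2) ((𝓝 x) ×ˢ (𝓝[>] (0 : ℝ))) (𝓝 0) :=
      tendsto_snd.mono_right nhdsWithin_le_nhds
    simpa using tendsto_fst.add (h2.smul_const w)
  refine clarkeDeriv_le hf ?_
  filter_upwards [hT.eventually hv, hw] with p h1 h2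
  have e : p.1 + p.2 • (v + w) = p.1 + p.2 • w + p.2 • v := by rw [smul_add]; abel
  have e2 : (f (p.1 + p.2 • (v + w)) - f p.1) / p.2 =
      (f (p.1 + p.2 • w + p.2 • v) - f (p.1 + p.2 • w)) / p.2 +
        (f (p.1 + p.2 • w) - f p.1) / p.2 := by
    rw [e]; ring
  rw [e2]
  linarith

lemma clarkeDeriv_smul_le (hf : LipschitzWith M f) (x v : X) {c : ℝ} (hc : 0 < c) :
    clarkeDeriv f x (c • v) ≤ c * clarkeDeriv f x v := by
  refine le_of_forall_pos_le_add fun ε hε => ?_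
  have hv := eventually_lt_of_clarkeDeriv_lt hf
    (show clarkeDeriv f x v < clarkeDeriv f x v + ε / c by linarith [div_pos hε hc])
  have hT : Tendsto (fun p : X × ℝ => (p.1, p.2 * c)) ((𝓝 x) ×ˢ (𝓝[>] (0 : ℝ)))
      ((𝓝 x) ×ˢ (𝓝[>] (0 : ℝ))) := by
    refine Tendsto.prodMk tendsto_fst (tendsto_nhdsWithin_iff.2 ⟨?_, ?_⟩)
    · have h2 : Tendsto (fun p : X × ℝ => p.2) ((𝓝 x) ×ˢ (𝓝[>] (0 : ℝ))) (𝓝 0) :=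
        tendsto_snd.mono_right nhdsWithin_le_nhds
      simpa using h2.mul_const c
    · exact (eventually_snd_pos x).mono fun p hp => mul_pos hp hc
  refine clarkeDeriv_le hf ?_
  filter_upwards [hT.eventually hv, eventually_snd_pos x] with p h1 hp
  have e : (f (p.1 + p.2 • c • v) - f p.1) / p.2 =
      c * ((f (p.1 + (p.2 * c) • v) - f p.1) / (p.2 * c)) := by
    rw [smul_smul]; field_simp
  rw [e]
  calc _ ≤ c * (clarkeDeriv f x v + ε / c) := mul_le_mul_of_nonneg_left h1.le hc.le
    _ = _ := by field_simp

lemma clarkeDeriv_smul (hf : LipschitzWith M f) (x : X) (c : ℝ) (hc : 0 < c) (v : X) :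
    clarkeDeriv f x (c • v) = c * clarkeDeriv f x v := by
  refine le_antisymm (clarkeDeriv_smul_le hf x v hc) ?_
  have h := clarkeDeriv_smul_le hf x (c • v) (inv_pos.2 hc)
  rw [inv_smul_smul₀ hc.ne'] at h
  rwa [le_inv_mul_iff₀ hc] at h

/-- A linear functional dominated by the Clarke derivative of a Lipschitz function is
automatically continuous, hence an element of the Clarke subdifferential. -/
lemma exists_mem_clarkeSubdiff (hf : LipschitzWith M f) (x : X) (g : X →ₗ[ℝ] ℝ)
    (hg : ∀ v, g v ≤ clarkeDeriv f x v) :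
    ∃ ζ ∈ clarkeSubdiff f x, ∀ v, ζ v = g v := by
  refine ⟨g.mkContinuous M fun v => ?_, fun v => hg v, fun v => rfl⟩
  rw [Real.norm_eq_abs, abs_le]
  constructor
  · have := (hg (-v)).trans (clarkeDeriv_le_norm hf x (-v))
    rw [map_neg, norm_neg] at this
    linarith
  · exact (hg v).trans (clarkeDeriv_le_norm hf x v)

/-- At a constrained minimizer, no direction of strict descent for the constraint is one for the
objective. -/
lemma clarkeDeriv_nonneg_of_neg {ρ h : X → ℝ} {Mρ Mh : ℝ≥0} (hρ : LipschitzWith Mρ ρ)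
    (hh : LipschitzWith Mh h) {x : ℝ} {ξ₀ : X} (hmem : h ξ₀ ≤ x)
    (hmin : ∀ ξ : X, h ξ ≤ x → ρ ξ₀ ≤ ρ ξ) {v : X} (hv : clarkeDeriv h ξ₀ v < 0) :
    0 ≤ clarkeDeriv ρ ξ₀ v := by
  by_contra! hneg
  obtain ⟨t, ⟨h1, h2⟩, ht⟩ := (((eventually_base_lt hh hv).and (eventually_base_lt hρ hneg)).and
    self_mem_nhdsWithin).exists
  have ht' : (0 : ℝ) < t := ht
  rw [div_lt_iff₀ ht', zero_mul] at h1 h2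
  linarith [hmin (ξ₀ + t • v) (by linarith)]

end ClarkeDeriv

section Sublinear

variable {E : Type*} [AddCommGroup E] [Module ℝ E] {p q : E → ℝ}

/-- Lagrange multiplier rule for two sublinear functionals under a Slater condition. The multiplier
is the infimum of `p v / (-q v)` over the directions `v` with `q v < 0`. -/
lemma exists_multiplier
    (p_hom : ∀ c : ℝ, 0 < c → ∀ v, p (c • v) = c * p v) (p_add : ∀ v w, p (v + w) ≤ p v + p w)
    (q_hom : ∀ c : ℝ, 0 < c → ∀ v, q (c • v) = c * q v) (q_add : ∀ v w, q (v + w) ≤ q v + q w)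
    (hpq : ∀ v, q v < 0 → 0 ≤ p v) {v₀ : E} (hv₀ : q v₀ < 0) :
    ∃ l : ℝ, 0 ≤ l ∧ ∀ v, 0 ≤ p v + l * q v := by
  -- Perturbing by small multiples of `v₀` relaxes the strict inequality.
  have hpq' : ∀ v, q v ≤ 0 → 0 ≤ p v := by
    intro v hv
    have key : ∀ ε : ℝ, 0 < ε → 0 ≤ p v + ε * p v₀ := by
      intro ε hε
      rw [← p_hom ε hε]
      refine (hpq _ ?_).trans (p_add _ _)
      have := q_add v (ε • v₀)
      rw [q_hom ε hε] at this
      nlinarith [mul_pos_of_neg_of_neg hv₀ (neg_neg_of_pos hε)]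
    by_contra! hneg
    have h0 : 0 ≤ p v₀ := hpq _ hv₀
    have hpos : 0 < -p v / (p v₀ + 1) := div_pos (by linarith) (by linarith)
    have h1 := key _ hpos
    have h2 : -p v / (p v₀ + 1) * (p v₀ + 1) = -p v := div_mul_cancel₀ _ (by linarith)
    nlinarith
  set S : Set ℝ := (fun v => p v / -q v) '' {v | q v < 0} with hS
  have hne : S.Nonempty := ⟨_, v₀, hv₀, rfl⟩
  have hlow : ∀ s ∈ S, 0 ≤ s := by
    rintro _ ⟨v, hv, rfl⟩
    exact div_nonneg (hpq v hv) (neg_nonneg.2 (le_of_lt hv))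
  have hbdd : BddBelow S := ⟨0, hlow⟩
  refine ⟨sInf S, le_csInf hne hlow, fun w => ?_⟩
  rcases lt_trichotomy (q w) 0 with hw | hw | hw
  · have h1 : sInf S ≤ p w / -q w := csInf_le hbdd ⟨w, hw, rfl⟩
    rw [le_div_iff₀ (by linarith)] at h1
    linarith
  · simpa [hw] using hpq' w hw.le
  · have h1 : -p w / q w ≤ sInf S := by
      refine le_csInf hne ?_
      rintro _ ⟨v, hv, rfl⟩
      have hv' : 0 < -q v := neg_pos.2 hv
      -- This positive combination of `w` and `v` satisfies `q ≤ 0`.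
      have h2 : 0 ≤ p ((-q v) • w + q w • v) := by
        refine hpq' _ ((q_add _ _).trans ?_)
        rw [q_hom _ hv', q_hom _ hw]
        linarith
      have h3 := h2.trans (p_add _ _)
      rw [p_hom _ hv', p_hom _ hw] at h3
      change -p w / q w ≤ p v / -q v
      rw [div_le_div_iff₀ hw hv']
      linarith
    rw [div_le_iff₀ hw] at h1
    linarith

/-- Hahn–Banach splitting: if `p + q ≥ 0` for sublinear `p` and `q`, some linear `g` satisfies
`g ≤ p` and `-g ≤ q`. -/
lemma exists_linear_split
    (p_hom : ∀ c : ℝ, 0 < c → ∀ v, p (c • v) = c * p v) (p_add : ∀ v w, p (v + w) ≤ p v + p w)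
    (q_hom : ∀ c : ℝ, 0 < c → ∀ v, q (c • v) = c * q v) (q_add : ∀ v w, q (v + w) ≤ q v + q w)
    (p_zero : p 0 ≤ 0) (q_zero : q 0 ≤ 0) (hpq : ∀ v, 0 ≤ p v + q v) :
    ∃ g : E →ₗ[ℝ] ℝ, (∀ v, g v ≤ p v) ∧ ∀ v, -g v ≤ q v := by
  let D : Submodule ℝ (E × E) := LinearMap.range (LinearMap.id.prod LinearMap.id : E →ₗ[ℝ] E × E)
  obtain ⟨G, hG0, hG⟩ := exists_extension_of_le_sublinear (⟨D, 0⟩ : (E × E) →ₗ.[ℝ] ℝ)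
    (fun z => p z.1 + q z.2)
    (fun c hc z => by
      simp only [Prod.smul_fst, Prod.smul_snd, p_hom c hc, q_hom c hc]; ring)
    (fun z w => by
      have := p_add z.1 w.1
      have := q_add z.2 w.2
      simp only [Prod.fst_add, Prod.snd_add]; linarith)
    (by
      rintro ⟨_, v, rfl⟩
      exact hpq v)
  have hdiag : ∀ v, G (v, v) = 0 := fun v => hG0 ⟨(v, v), v, rfl⟩
  refine ⟨G.comp (LinearMap.inl ℝ E E), fun v => ?_, fun v => ?_⟩
  · have := hG (v, 0)
    simp only [LinearMap.comp_apply, LinearMap.inl_apply] at *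
    linarith
  · have h1 := hG (0, v)
    have h2 : G (v, v) = G (v, 0) + G (0, v) := by rw [← map_add]; simp
    have h3 := hdiag v
    simp only [LinearMap.comp_apply, LinearMap.inl_apply] at *
    linarith

end Sublinear

lemma clarkeSubdiff_nonempty {X : Type*} [NormedAddCommGroup X] [NormedSpace ℝ X] {f : X → ℝ}
    {M : ℝ≥0} (hf : LipschitzWith M f) (x : X) : (clarkeSubdiff f x).Nonempty := by
  -- Split `0 ≤ f°(x;v) + f°(x;-v)`.
  obtain ⟨g, hg, -⟩ := exists_linear_split (p := clarkeDeriv f x)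
    (q := fun v => clarkeDeriv f x (-v))
    (clarkeDeriv_smul hf x) (clarkeDeriv_add_le hf x)
    (fun c hc v => by rw [← smul_neg, clarkeDeriv_smul hf x c hc])
    (fun v w => by rw [neg_add]; exact clarkeDeriv_add_le hf x _ _)
    (clarkeDeriv_zero_le hf x) (by simpa using clarkeDeriv_zero_le hf x)
    (fun v => by
      have h2 := clarkeDeriv_smul hf x 2 two_pos 0
      have h := clarkeDeriv_add_le hf x v (-v)
      rw [smul_zero] at h2
      rw [add_neg_cancel] at h
      linarith)
  obtain ⟨ζ, hζ, -⟩ := exists_mem_clarkeSubdiff hf x g hg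
  exact ⟨ζ, hζ⟩

/-- Necessary condition for constrained optimality: if `ξ*` minimizes the Lipschitz
function `ρ` over `A = {ξ : h(ξ) ≤ x}` with `h` Lipschitz and `0 ∉ ∂°h(ξ*)`, then
there are `λ ≥ 0`, `ζ ∈ ∂°ρ(ξ*)`, `η ∈ ∂°h(ξ*)` with `ζ + λ·η = 0`. -/
theorem necessary_condition_constrained_optimality
    {X : Type*} [NormedAddCommGroup X] [NormedSpace ℝ X] [CompleteSpace X]
    (ρ h : X → ℝ) (Mρ Mh : ℝ≥0) (hρ : LipschitzWith Mρ ρ) (hh : LipschitzWith Mh h)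
    (x : ℝ) (ξstar : X) (hmem : h ξstar ≤ x)
    (hmin : ∀ ξ : X, h ξ ≤ x → ρ ξstar ≤ ρ ξ)
    (h0 : (0 : X →L[ℝ] ℝ) ∉ clarkeSubdiff h ξstar) :
    ∃ l : ℝ, 0 ≤ l ∧ ∃ ζ ∈ clarkeSubdiff ρ ξstar, ∃ η ∈ clarkeSubdiff h ξstar,
      ζ + l • η = 0 := by
  obtain ⟨v₀, hv₀⟩ : ∃ v, clarkeDeriv h ξstar v < 0 := by
    by_contra! hcon
    exact h0 fun v => by simpa using hcon v
  obtain ⟨l, hl, hpq⟩ := exists_multiplier (clarkeDeriv_smul hρ ξstar)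
    (clarkeDeriv_add_le hρ ξstar) (clarkeDeriv_smul hh ξstar) (clarkeDeriv_add_le hh ξstar)
    (fun v hv => clarkeDeriv_nonneg_of_neg hρ hh hmem hmin hv) hv₀
  obtain ⟨g, hgρ, hgh⟩ := exists_linear_split (p := clarkeDeriv ρ ξstar)
    (q := fun v => l * clarkeDeriv h ξstar v)
    (clarkeDeriv_smul hρ ξstar) (clarkeDeriv_add_le hρ ξstar)
    (fun c hc v => by rw [clarkeDeriv_smul hh ξstar c hc]; ring)
    (fun v w => by
      rw [← mul_add]; exact mul_le_mul_of_nonneg_left (clarkeDeriv_add_le hh ξstar v w) hl)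
    (clarkeDeriv_zero_le hρ ξstar)
    (mul_nonpos_of_nonneg_of_nonpos hl (clarkeDeriv_zero_le hh ξstar)) hpq
  obtain ⟨ζ, hζ, hζg⟩ := exists_mem_clarkeSubdiff hρ ξstar g hgρ
  refine ⟨l, hl, ζ, hζ, ?_⟩
  rcases hl.eq_or_lt with rfl | hlpos
  · obtain ⟨η, hη⟩ := clarkeSubdiff_nonempty hh ξstar
    refine ⟨η, hη, ?_⟩
    ext v
    -- For `l = 0` both `-g v` and `-g (-v)` are nonpositive, so `g = 0`.
    have h1 := hgh v
    have h2 := hgh (-v)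
    simp only [map_neg, zero_mul] at h1 h2
    simp only [zero_smul, add_zero, hζg, ContinuousLinearMap.zero_apply]
    linarith
  · obtain ⟨η, hη, hηg⟩ := exists_mem_clarkeSubdiff hh ξstar (-(l⁻¹ • g)) fun v => by
      have h1 := hgh v
      simp only [LinearMap.neg_apply, LinearMap.smul_apply, smul_eq_mul]
      rw [← mul_neg, inv_mul_le_iff₀ hlpos]
      exact h1
    refine ⟨η, hη, ?_⟩
    ext v
    simp only [ContinuousLinearMap.add_apply, ContinuousLinearMap.smul_apply, hζg, hηg,
      LinearMap.neg_apply, LinearMap.smul_apply, smul_eq_mul, ContinuousLinearMap.zero_apply]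
    field_simp
    ring
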